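/- arXiv:1909.10397 — 5 statements merged into one kernel-verified Lean document; each statement's English description precedes it below -/
import Mathlib

section
/- The integral J := ∫_{0<s<s′<1} ∫_{0<y<y′<∞} (1−s)^{−1} (1−s′)^{−1} ( s y ( s′ y′ − s y ) )^{−1/2} exp( −y²/(1−s) − y′²/(1−s′) ) dy dy′ ds ds′ is finite. -/
open MeasureTheory Filter Set

/-- The beta integral with positive parameters is finite. -/
lemma lintegral_rpow_mul_one_sub_rpow_lt_top {α β : ℝ} (hα : 0 < α) (hβ : 0 < β) :
    ∫⁻ x in Ioo (0:ℝ) 1, ENNReal.ofReal (x ^ (α - 1) * (1 - x) ^ (β - 1)) < ⊤ := by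
  have hB := ProbabilityTheory.beta_pos hα hβ
  have h := ProbabilityTheory.lintegral_betaPDF_eq_one hα hβ
  rw [ProbabilityTheory.lintegral_betaPDF] at h
  simp_rw [mul_assoc, ENNReal.ofReal_mul (one_div_pos.2 hB).le] at h
  rw [lintegral_const_mul' _ _ ENNReal.ofReal_ne_top] at h
  refine lt_top_iff_ne_top.2 fun htop => ?_
  rw [htop, ENNReal.mul_top (by simpa using hB)] at h
  exact ENNReal.top_ne_one h

/-- A half-line Gaussian moment of order `-1/2`. -/
lemma lintegral_rpow_neg_half_mul_exp_neg_sq_div {b : ℝ} (hb : 0 < b) :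
    ∫⁻ x in Ioi (0:ℝ), ENNReal.ofReal (x ^ (-(1:ℝ) / 2) * Real.exp (-x ^ 2 / b)) =
      ENNReal.ofReal (b ^ ((1:ℝ) / 4) * (1 / 2 * Real.Gamma (1 / 4))) := by
  have hq : (-1:ℝ) < -(1:ℝ) / 2 := by norm_num
  have hfun : ∀ x : ℝ, -x ^ 2 / b = -b⁻¹ * x ^ (2:ℝ) := fun x => by
    rw [Real.rpow_two]; ring
  simp_rw [hfun]
  rw [← ofReal_integral_eq_lintegral_ofReal
      (integrableOn_rpow_mul_exp_neg_mul_rpow hq two_pos (inv_pos.2 hb)),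
    integral_rpow_mul_exp_neg_mul_rpow two_pos hq (inv_pos.2 hb),
    Real.inv_rpow hb.le, ← Real.rpow_neg hb.le]
  · congr 1
    norm_num [mul_assoc]
  · filter_upwards [ae_restrict_mem measurableSet_Ioi] with x hx
    have : (0:ℝ) < x := hx
    show 0 ≤ x ^ (-(1:ℝ) / 2) * Real.exp (-b⁻¹ * x ^ (2:ℝ))
    positivity

/-- Translating a half-line integral to the origin. -/
lemma setLIntegral_Ioi_comp_sub_right (f : ℝ → ENNReal) (a : ℝ) :
    ∫⁻ x in Ioi a, f (x - a) = ∫⁻ x in Ioi (0:ℝ), f x := by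
  rw [← lintegral_indicator measurableSet_Ioi, ← lintegral_indicator measurableSet_Ioi,
    ← lintegral_sub_right_eq_self ((Ioi (0:ℝ)).indicator f) a]
  congr 1 with x
  simp [indicator]

/-- Pointwise domination of the integrand by a product of powers and Gaussian factors. -/
lemma integrand_le_mul {s s' y y' : ℝ} (hs : 0 < s) (hss' : s < s') (hs' : s' < 1)
    (hy : 0 < y) (hyy' : y < y') :
    (1 - s)⁻¹ * (1 - s')⁻¹ * (s * y * (s' * y' - s * y)) ^ (-(1:ℝ) / 2) *
        Real.exp (-y ^ 2 / (1 - s) - y' ^ 2 / (1 - s')) ≤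
      (s ^ ((1:ℝ) / 2 - 1) * (1 - s) ^ ((1:ℝ) / 4 - 1)) *
        (s' ^ ((1:ℝ) / 2 - 1) * (1 - s') ^ (-(5:ℝ) / 4)) *
        (y ^ (-(1:ℝ) / 2) * Real.exp (-y ^ 2 / (1 - s'))) *
        ((y' - y) ^ (-(1:ℝ) / 2) * Real.exp (-(y' - y) ^ 2 / (1 - s'))) := by
  have ha : 0 < 1 - s := by linarith
  have hb : 0 < 1 - s' := by linarith
  have h0 : 0 < s' := hs.trans hss'
  have hz : 0 < y' - y := by linarith
  have hexp : Real.exp (-y ^ 2 / (1 - s) - y' ^ 2 / (1 - s')) ≤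
      Real.exp (-y ^ 2 / (1 - s')) * Real.exp (-(y' - y) ^ 2 / (1 - s')) := by
    rw [← Real.exp_add, Real.exp_le_exp]
    have h1 : 0 ≤ y ^ 2 / (1 - s) := by positivity
    have h2 : (y ^ 2 + (y' - y) ^ 2) / (1 - s') ≤ y' ^ 2 / (1 - s') := by
      gcongr
      nlinarith
    rw [add_div] at h2
    simp only [neg_div]
    linarith
  have hpow : (s * y * (s' * y' - s * y)) ^ (-(1:ℝ) / 2) ≤
      s ^ ((1:ℝ) / 2 - 1) * s' ^ ((1:ℝ) / 2 - 1) * y ^ (-(1:ℝ) / 2) *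
        (y' - y) ^ (-(1:ℝ) / 2) := by
    have hle : s * y * (s' * (y' - y)) ≤ s * y * (s' * y' - s * y) := by
      gcongr
      nlinarith
    refine (Real.rpow_le_rpow_of_nonpos (by positivity) hle (by norm_num)).trans_eq ?_
    rw [Real.mul_rpow (by positivity) (by positivity), Real.mul_rpow hs.le hy.le,
      Real.mul_rpow h0.le hz.le, show (1:ℝ) / 2 - 1 = -(1:ℝ) / 2 by norm_num]
    ring
  have hinv : (1 - s)⁻¹ * (1 - s')⁻¹ ≤
      (1 - s) ^ ((1:ℝ) / 4 - 1) * (1 - s') ^ (-(5:ℝ) / 4) := by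
    have hquarter : (1 - s) ^ (-(1:ℝ) / 4) ≤ (1 - s') ^ (-(1:ℝ) / 4) :=
      Real.rpow_le_rpow_of_nonpos hb (by linarith) (by norm_num)
    have hA : (1 - s)⁻¹ = (1 - s) ^ ((1:ℝ) / 4 - 1) * (1 - s) ^ (-(1:ℝ) / 4) := by
      rw [← Real.rpow_add ha, ← Real.rpow_neg_one]
      norm_num
    have hB : (1 - s') ^ (-(5:ℝ) / 4) = (1 - s') ^ (-(1:ℝ) / 4) * (1 - s')⁻¹ := by
      rw [← Real.rpow_neg_one, ← Real.rpow_add hb]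
      norm_num
    rw [hA, hB, ← mul_assoc]
    gcongr
  calc _ ≤ ((1 - s) ^ ((1:ℝ) / 4 - 1) * (1 - s') ^ (-(5:ℝ) / 4)) *
        (s ^ ((1:ℝ) / 2 - 1) * s' ^ ((1:ℝ) / 2 - 1) * y ^ (-(1:ℝ) / 2) *
          (y' - y) ^ (-(1:ℝ) / 2)) *
        (Real.exp (-y ^ 2 / (1 - s')) * Real.exp (-(y' - y) ^ 2 / (1 - s'))) := by
        gcongr
        have : 0 < s' * y' - s * y := by nlinarith
        positivity
    _ = _ := by ring

/-- Integrating out the inner two variables leaves at most a product of beta densities. -/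
lemma lintegral_lintegral_integrand_le {s s' : ℝ} (hs : 0 < s) (hss' : s < s') (hs' : s' < 1) :
    (∫⁻ y in Ioi (0:ℝ), ∫⁻ y' in Ioi y,
      ENNReal.ofReal ((1 - s)⁻¹ * (1 - s')⁻¹ *
        (s * y * (s' * y' - s * y)) ^ (-(1:ℝ)/2) *
        Real.exp (-y ^ 2 / (1 - s) - y' ^ 2 / (1 - s')))) ≤
      ENNReal.ofReal ((1 / 2 * Real.Gamma (1 / 4)) ^ 2) *
        ENNReal.ofReal (s ^ ((1:ℝ) / 2 - 1) * (1 - s) ^ ((1:ℝ) / 4 - 1)) *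
        ENNReal.ofReal (s' ^ ((1:ℝ) / 2 - 1) * (1 - s') ^ ((1:ℝ) / 4 - 1)) := by
  have ha : 0 < 1 - s := by linarith
  have hb : 0 < 1 - s' := by linarith
  have h0 : 0 < s' := hs.trans hss'
  have hC : 0 < Real.Gamma (1 / 4) := Real.Gamma_pos_of_pos (by norm_num)
  set A := s ^ ((1:ℝ) / 2 - 1) * (1 - s) ^ ((1:ℝ) / 4 - 1) with hA
  set B := s' ^ ((1:ℝ) / 2 - 1) * (1 - s') ^ (-(5:ℝ) / 4) with hB
  have hA0 : 0 ≤ A := by positivity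
  have hB0 : 0 ≤ B := by positivity
  let g : ℝ → ℝ := fun x => x ^ (-(1:ℝ) / 2) * Real.exp (-x ^ 2 / (1 - s'))
  have hg : ∀ x, 0 < x → 0 ≤ g x := fun x hx => by positivity
  set M := (1 - s') ^ ((1:ℝ) / 4) * (1 / 2 * Real.Gamma (1 / 4)) with hM
  have hM0 : 0 ≤ M := by positivity
  have hgM : ∫⁻ x in Ioi (0:ℝ), ENNReal.ofReal (g x) = ENNReal.ofReal M :=
    lintegral_rpow_neg_half_mul_exp_neg_sq_div hb
  calc _ ≤ ∫⁻ y in Ioi (0:ℝ), ∫⁻ y' in Ioi y,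
        ENNReal.ofReal (A * B * g y) * ENNReal.ofReal (g (y' - y)) := by
        refine setLIntegral_mono' measurableSet_Ioi fun y hy =>
          setLIntegral_mono' measurableSet_Ioi fun y' hy' => ?_
        rw [← ENNReal.ofReal_mul (mul_nonneg (mul_nonneg hA0 hB0) (hg y hy))]
        exact ENNReal.ofReal_le_ofReal (integrand_le_mul hs hss' hs' hy hy')
    _ = ∫⁻ y in Ioi (0:ℝ), ENNReal.ofReal (A * B) * ENNReal.ofReal (g y) *
          ENNReal.ofReal M := by
        refine lintegral_congr fun y => ?_
        rw [lintegral_const_mul' _ _ ENNReal.ofReal_ne_top,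
          setLIntegral_Ioi_comp_sub_right (fun x => ENNReal.ofReal (g x)), hgM,
          ENNReal.ofReal_mul (mul_nonneg hA0 hB0)]
    _ = ENNReal.ofReal (A * B) * ENNReal.ofReal M * ENNReal.ofReal M := by
        rw [lintegral_mul_const' _ _ ENNReal.ofReal_ne_top,
          lintegral_const_mul' _ _ ENNReal.ofReal_ne_top, hgM]
    _ = _ := by
        rw [← ENNReal.ofReal_mul (by positivity), ← ENNReal.ofReal_mul (by positivity),
          ← ENNReal.ofReal_mul (by positivity), ← ENNReal.ofReal_mul (by positivity)]
        have hpow : (1 - s') ^ ((1:ℝ) / 4 - 1) =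
            (1 - s') ^ (-(5:ℝ) / 4) * (1 - s') ^ ((1:ℝ) / 4) * (1 - s') ^ ((1:ℝ) / 4) := by
          rw [← Real.rpow_add hb, ← Real.rpow_add hb]
          norm_num
        rw [hpow, hB, hM]
        congr 1
        ring

/-- The integral
`J = ∫_{0<s<s'<1} ∫_{0<y<y'<∞} (1-s)⁻¹ (1-s')⁻¹ (s y (s' y' - s y))^{-1/2}
  exp(-y²/(1-s) - y'²/(1-s')) dy dy' ds ds'` is finite. -/
theorem integral_J_finite :
    (∫⁻ s in Ioo (0:ℝ) 1, ∫⁻ s' in Ioo s 1, ∫⁻ y in Ioi (0:ℝ), ∫⁻ y' in Ioi y,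
      ENNReal.ofReal ((1 - s)⁻¹ * (1 - s')⁻¹ *
        (s * y * (s' * y' - s * y)) ^ (-(1:ℝ)/2) *
        Real.exp (-y ^ 2 / (1 - s) - y' ^ 2 / (1 - s')))) < ⊤ := by
  have hI := lintegral_rpow_mul_one_sub_rpow_lt_top
    (show (0:ℝ) < 1 / 2 by norm_num) (show (0:ℝ) < 1 / 4 by norm_num)
  set f : ℝ → ENNReal :=
    fun x => ENNReal.ofReal (x ^ ((1:ℝ) / 2 - 1) * (1 - x) ^ ((1:ℝ) / 4 - 1)) with hf
  set C := ENNReal.ofReal ((1 / 2 * Real.Gamma (1 / 4)) ^ 2) with hC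
  have hC_top : C ≠ ⊤ := ENNReal.ofReal_ne_top
  calc _ ≤ ∫⁻ s in Ioo (0:ℝ) 1, ∫⁻ s' in Ioo s 1, C * f s * f s' :=
        setLIntegral_mono' measurableSet_Ioo fun s hs =>
          setLIntegral_mono' measurableSet_Ioo fun s' hs' =>
            lintegral_lintegral_integrand_le hs.1 hs'.1 hs'.2
    _ ≤ ∫⁻ s in Ioo (0:ℝ) 1, C * f s * ∫⁻ s' in Ioo (0:ℝ) 1, f s' := by
        refine setLIntegral_mono' measurableSet_Ioo fun s hs => ?_
        rw [lintegral_const_mul' _ _ (ENNReal.mul_ne_top hC_top ENNReal.ofReal_ne_top)]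
        gcongr
        exact hs.1.le
    _ = C * (∫⁻ s in Ioo (0:ℝ) 1, f s) * ∫⁻ s' in Ioo (0:ℝ) 1, f s' := by
        rw [lintegral_mul_const' _ _ hI.ne, lintegral_const_mul' _ _ hC_top]
    _ < ⊤ := ENNReal.mul_lt_top (ENNReal.mul_lt_top hC_top.lt_top hI) hI
end

section
/- For every t₀ > 0 and every x ∈ ℝ, one has lim_{t→∞} t^{1/4} ∫₀^{t₀} ∫_ℝ p_{t−s}( x − y )² · ( s |y| )^{−1/2} dy ds = 0. -/
open MeasureTheory Filter Set

/-- The one-dimensional heat kernel `p_t(x) = (2πt)^{-1/2} exp(-x²/(2t))`. -/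
noncomputable def heatKernel (t x : ℝ) : ℝ :=
  (2 * Real.pi * t) ^ (-(1:ℝ)/2) * Real.exp (-x ^ 2 / (2 * t))

/-- The function `y ↦ y^{-1/2}` on `(0, 1]`, extended by zero. -/
noncomputable def unitInvSqrt : ℝ → ℝ :=
  (Ioc (0:ℝ) 1).indicator fun y => y ^ (-(1:ℝ)/2)

lemma integrableOn_rpow_neg_half {a : ℝ} (ha : 0 ≤ a) :
    IntegrableOn (fun y : ℝ => y ^ (-(1:ℝ)/2)) (Ioc 0 a) :=
  (intervalIntegrable_iff_integrableOn_Ioc_of_le ha).1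
    (intervalIntegral.intervalIntegrable_rpow' (by norm_num))

lemma integrable_unitInvSqrt : Integrable unitInvSqrt :=
  (integrableOn_rpow_neg_half zero_le_one).integrable_indicator measurableSet_Ioc

lemma unitInvSqrt_nonneg (y : ℝ) : 0 ≤ unitInvSqrt y :=
  indicator_nonneg (fun _ hz => Real.rpow_nonneg hz.1.le _) y

lemma abs_rpow_neg_half_le (y : ℝ) :
    |y| ^ (-(1:ℝ)/2) ≤ unitInvSqrt y + unitInvSqrt (-y) + 1 := by
  have h1 := unitInvSqrt_nonneg y
  have h2 := unitInvSqrt_nonneg (-y)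
  rcases le_or_gt |y| 1 with hy | hy
  · rcases lt_trichotomy y 0 with h | h | h
    · have : unitInvSqrt (-y) = |y| ^ (-(1:ℝ)/2) := by
        rw [abs_of_neg h] at hy ⊢
        exact indicator_of_mem (show -y ∈ Ioc (0:ℝ) 1 from ⟨by linarith, hy⟩) _
      linarith
    · subst h
      rw [abs_zero, Real.zero_rpow (by norm_num)]
      linarith
    · have : unitInvSqrt y = |y| ^ (-(1:ℝ)/2) := by
        rw [abs_of_pos h] at hy ⊢
        exact indicator_of_mem (show y ∈ Ioc (0:ℝ) 1 from ⟨h, hy⟩) _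
      linarith
  · have := Real.rpow_le_one_of_one_le_of_nonpos hy.le (show -(1:ℝ)/2 ≤ 0 by norm_num)
    linarith

lemma heatKernel_sq {u : ℝ} (hu : 0 < u) (z : ℝ) :
    heatKernel u z ^ 2 = (2 * Real.pi * u)⁻¹ * Real.exp (-u⁻¹ * z ^ 2) := by
  have hp : 0 < 2 * Real.pi * u := by positivity
  rw [heatKernel, mul_pow, ← Real.rpow_natCast, ← Real.rpow_mul hp.le, ← Real.exp_nat_mul,
    ← Real.rpow_neg_one]
  congr 2
  · norm_num
  · push_cast
    field_simp

lemma integral_heatKernel_sq_mul_le {u : ℝ} (hu : 1 ≤ u) (x : ℝ) :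
    ∫ y : ℝ, heatKernel u (x - y) ^ 2 * |y| ^ (-(1:ℝ)/2) ≤
      u ^ (-(1:ℝ)/2) * (2 * (∫ y, unitInvSqrt y) + √Real.pi) := by
  have hu0 : 0 < u := by linarith
  have hA : 0 ≤ ∫ y, unitInvSqrt y := integral_nonneg unitInvSqrt_nonneg
  have hneg : Integrable fun y => unitInvSqrt (-y) := integrable_unitInvSqrt.comp_neg
  have hG : Integrable fun y : ℝ => Real.exp (-u⁻¹ * (x - y) ^ 2) :=
    (integrable_exp_neg_mul_sq (inv_pos.2 hu0)).comp_sub_left x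
  have hsum : Integrable fun y => unitInvSqrt y + unitInvSqrt (-y) :=
    integrable_unitInvSqrt.add hneg
  calc
    _ ≤ ∫ y : ℝ, (2 * Real.pi * u)⁻¹ *
        (unitInvSqrt y + unitInvSqrt (-y) + Real.exp (-u⁻¹ * (x - y) ^ 2)) := by
      refine integral_mono_of_nonneg (ae_of_all _ fun y => ?_) ((hsum.add hG).const_mul _)
        (ae_of_all _ fun y => ?_)
      · exact mul_nonneg (sq_nonneg _) (Real.rpow_nonneg (abs_nonneg y) _)
      · dsimp only
        rw [heatKernel_sq hu0, mul_assoc]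
        refine mul_le_mul_of_nonneg_left ?_ (by positivity)
        have he : Real.exp (-u⁻¹ * (x - y) ^ 2) ≤ 1 := by
          rw [Real.exp_le_one_iff, neg_mul, neg_nonpos]
          positivity
        have hs := add_nonneg (unitInvSqrt_nonneg y) (unitInvSqrt_nonneg (-y))
        have := mul_le_mul_of_nonneg_left (abs_rpow_neg_half_le y)
          (Real.exp_nonneg (-u⁻¹ * (x - y) ^ 2))
        nlinarith [mul_le_mul_of_nonneg_right he hs]
    _ = (2 * Real.pi * u)⁻¹ * (2 * (∫ y, unitInvSqrt y) + √Real.pi * √u) := by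
      rw [integral_const_mul, integral_add hsum hG, integral_add integrable_unitInvSqrt hneg,
        integral_neg_eq_self unitInvSqrt volume,
        integral_sub_left_eq_self (fun z => Real.exp (-u⁻¹ * z ^ 2)) volume x,
        integral_gaussian, div_inv_eq_mul, Real.sqrt_mul Real.pi_pos.le, two_mul (∫ y, _)]
    _ ≤ u⁻¹ * (√u * (2 * (∫ y, unitInvSqrt y) + √Real.pi)) := by
      have h1 : 1 ≤ √u := Real.one_le_sqrt.2 hu
      refine mul_le_mul ?_ (by nlinarith) (by positivity) (by positivity)
      exact inv_anti₀ hu0 (by nlinarith [Real.pi_gt_three])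
    _ = _ := by
      have : u ^ (-(1:ℝ)/2) = u⁻¹ * √u := by
        rw [Real.sqrt_eq_rpow, ← Real.rpow_neg_one, ← Real.rpow_add hu0]
        norm_num
      rw [this, mul_assoc]

/-- For every `t₀ > 0` and `x ∈ ℝ`,
`lim_{t→∞} t^{1/4} ∫₀^{t₀} ∫_ℝ p_{t-s}(x-y)² (s|y|)^{-1/2} dy ds = 0`. -/
theorem tendsto_scaled_integral (t₀ : ℝ) (ht₀ : 0 < t₀) (x : ℝ) :
    Tendsto (fun t : ℝ => t ^ ((1:ℝ)/4) * ∫ s in Ioo (0:ℝ) t₀, ∫ y : ℝ,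
        heatKernel (t - s) (x - y) ^ 2 * (s * |y|) ^ (-(1:ℝ)/2))
      atTop (nhds 0) := by
  set C := 2 * (∫ y, unitInvSqrt y) + √Real.pi
  have hA : 0 ≤ ∫ y, unitInvSqrt y := integral_nonneg unitInvSqrt_nonneg
  have hC : 0 ≤ C := by positivity
  set D := ∫ s in Ioo (0:ℝ) t₀, s ^ (-(1:ℝ)/2)
  have hnonneg : ∀ t : ℝ, ∀ s ∈ Ioo (0:ℝ) t₀,
      0 ≤ ∫ y : ℝ, heatKernel (t - s) (x - y) ^ 2 * (s * |y|) ^ (-(1:ℝ)/2) :=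
    fun t s hs => integral_nonneg fun y =>
      mul_nonneg (sq_nonneg _) (Real.rpow_nonneg (mul_nonneg hs.1.le (abs_nonneg y)) _)
  have hbound : ∀ t : ℝ, 2 ≤ t → 2 * t₀ ≤ t →
      ∫ s in Ioo (0:ℝ) t₀, ∫ y : ℝ,
        heatKernel (t - s) (x - y) ^ 2 * (s * |y|) ^ (-(1:ℝ)/2) ≤
      (t / 2) ^ (-(1:ℝ)/2) * C * D := by
    intro t ht ht'
    rw [← integral_const_mul]
    refine integral_mono_of_nonneg ?_ ?_ ?_
    · exact (ae_restrict_mem measurableSet_Ioo).mono (hnonneg t)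
    · exact ((integrableOn_rpow_neg_half ht₀.le).mono_set Ioo_subset_Ioc_self).const_mul _
    · filter_upwards [ae_restrict_mem measurableSet_Ioo] with s hs
      have hu : t / 2 ≤ t - s := by linarith [hs.2]
      have hs0 : 0 ≤ s ^ (-(1:ℝ)/2) := Real.rpow_nonneg hs.1.le _
      calc
        _ = (∫ y : ℝ, heatKernel (t - s) (x - y) ^ 2 * |y| ^ (-(1:ℝ)/2)) *
            s ^ (-(1:ℝ)/2) := by
          rw [← integral_mul_const]
          congr 1 with y
          rw [Real.mul_rpow hs.1.le (abs_nonneg y)]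
          ring
        _ ≤ (t - s) ^ (-(1:ℝ)/2) * C * s ^ (-(1:ℝ)/2) :=
          mul_le_mul_of_nonneg_right
            (integral_heatKernel_sq_mul_le (by linarith) x) hs0
        _ ≤ _ := by
          have := Real.rpow_le_rpow_of_nonpos (show 0 < t / 2 by linarith) hu
            (show -(1:ℝ)/2 ≤ 0 by norm_num)
          gcongr
  have hlim : Tendsto (fun t : ℝ => t ^ (-((1:ℝ)/4)) * ((1 / 2 : ℝ) ^ (-(1:ℝ)/2) * C * D))
      atTop (nhds 0) := by
    simpa using (tendsto_rpow_neg_atTop (show (0:ℝ) < 1/4 by norm_num)).mul_const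
      ((1 / 2 : ℝ) ^ (-(1:ℝ)/2) * C * D)
  refine squeeze_zero' ?_ ?_ hlim
  · filter_upwards [eventually_ge_atTop 0] with t ht
    exact mul_nonneg (Real.rpow_nonneg ht _) (setIntegral_nonneg measurableSet_Ioo (hnonneg t))
  · filter_upwards [eventually_ge_atTop 2, eventually_ge_atTop (2 * t₀)] with t ht ht'
    have ht0 : 0 < t := by linarith
    refine (mul_le_mul_of_nonneg_left (hbound t ht ht') (Real.rpow_nonneg ht0.le _)).trans_eq ?_
    rw [div_eq_mul_one_div t, Real.mul_rpow ht0.le (by norm_num),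
      show -((1:ℝ)/4) = 1/4 + -1/2 by norm_num, Real.rpow_add ht0]
    ring
end

section
/- For every α ≥ 0, one has lim_{λ→0⁺} ∫₀¹ ∫_ℝ ( s |y| )^α · ( ∫_{−1}^{1} p_{λ(1−s)}( x − y ) dx − 𝟙_{[−1,1]}(y) )² dy ds = 0. -/
open MeasureTheory Filter Set

open ProbabilityTheory
open scoped NNReal

lemma hasSubgaussianMGF_sub_gaussianReal (m : ℝ) (v : ℝ≥0) :
    HasSubgaussianMGF (fun x => x - m) v (gaussianReal m v) where
  integrable_exp_mul t := by
    have h := (integrable_exp_mul_gaussianReal (μ := m) (v := v) t).mul_const (Real.exp (-(t * m)))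
    refine h.congr (.of_forall fun x => ?_)
    simp only [← Real.exp_add]
    ring_nf
  mgf_le t := by
    simp_rw [sub_eq_add_neg]
    rw [mgf_add_const, mgf_fun_id_gaussianReal, ← Real.exp_add]
    exact Real.exp_le_exp.2 (by linarith)

/-- Two-sided Gaussian tail bound. -/
lemma gaussianReal_real_abs_sub_ge_le (m : ℝ) (v : ℝ≥0) {δ : ℝ} (hδ : 0 ≤ δ) :
    (gaussianReal m v).real {x | δ ≤ |x - m|} ≤ 2 * Real.exp (-δ ^ 2 / (2 * v)) := by
  have h := hasSubgaussianMGF_sub_gaussianReal m v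
  have hsub : {x | δ ≤ |x - m|} ⊆ {x | δ ≤ x - m} ∪ {x | δ ≤ (-fun x => x - m) x} :=
    fun x (hx : δ ≤ |x - m|) => show δ ≤ x - m ∨ δ ≤ -(x - m) from le_abs.1 hx
  calc _ ≤ _ := measureReal_mono hsub
    _ ≤ _ := measureReal_union_le _ _
    _ ≤ _ := add_le_add (h.measure_ge_le hδ) (h.neg.measure_ge_le hδ)
    _ = _ := by ring

lemma setIntegral_heatKernel_eq_gaussianReal {t : ℝ≥0} (ht : t ≠ 0) (y : ℝ) (A : Set ℝ) :
    ∫ x in A, heatKernel t (x - y) = (gaussianReal y t).real A := by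
  have h (x : ℝ) : heatKernel t (x - y) = gaussianPDFReal y t x := by
    rw [heatKernel, gaussianPDFReal, neg_div, Real.rpow_neg (by positivity), Real.sqrt_eq_rpow]
  simp_rw [h]
  rw [measureReal_def, gaussianReal_apply_eq_integral _ ht, ENNReal.toReal_ofReal]
  exact integral_nonneg fun x => gaussianPDFReal_nonneg _ _ _

/-- The heat flow of `𝟙_{[-1,1]}` is Gaussian-close to it away from the points `±1`. -/
lemma abs_setIntegral_heatKernel_sub_indicator_le {t : ℝ} (ht : 0 < t) (y : ℝ) :
    |(∫ x in Icc (-1:ℝ) 1, heatKernel t (x - y)) - (if y ∈ Icc (-1:ℝ) 1 then (1:ℝ) else 0)| ≤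
      2 * Real.exp (-(|y| - 1) ^ 2 / (2 * t)) := by
  lift t to ℝ≥0 using ht.le
  have ht' : t ≠ 0 := by rintro rfl; simp at ht
  rw [setIntegral_heatKernel_eq_gaussianReal ht']
  have key := gaussianReal_real_abs_sub_ge_le y t (abs_nonneg (|y| - 1))
  rw [sq_abs] at key
  refine le_trans ?_ key
  split_ifs with hy
  · have hc := probReal_compl_eq_one_sub (μ := gaussianReal y t)
      (measurableSet_Icc (a := -1) (b := 1))
    rw [abs_sub_comm, ← hc, abs_of_nonneg measureReal_nonneg]
    refine measureReal_mono fun x hx => ?_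
    rw [mem_compl_iff, mem_Icc, ← abs_le, not_le] at hx
    rw [mem_Icc, ← abs_le] at hy
    rw [mem_ofPred_eq, abs_sub_comm, abs_of_nonneg (by linarith)]
    linarith [abs_sub_abs_le_abs_sub x y]
  · rw [sub_zero, abs_of_nonneg measureReal_nonneg]
    refine measureReal_mono fun x hx => ?_
    rw [mem_Icc, ← abs_le, not_le] at hy
    rw [mem_Icc, ← abs_le] at hx
    rw [mem_ofPred_eq, abs_of_nonneg (by linarith), abs_sub_comm]
    linarith [abs_sub_abs_le_abs_sub y x]

lemma integrable_abs_rpow_mul_exp_neg_mul_sq {α b : ℝ} (hα : -1 < α) (hb : 0 < b) :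
    Integrable fun y : ℝ => |y| ^ α * Real.exp (-b * y ^ 2) := by
  have h := integrable_rpow_mul_exp_neg_mul_sq hb hα
  refine (h.norm.add h.comp_neg.norm).mono' (by fun_prop) (.of_forall fun y => ?_)
  rw [Real.norm_of_nonneg (by positivity)]
  simp only [Pi.add_apply, norm_mul, Real.norm_eq_abs, Real.abs_exp, neg_sq, ← add_mul]
  gcongr
  rcases abs_choice y with hy | hy <;> rw [hy]
  · linarith [le_abs_self (y ^ α), abs_nonneg ((-y) ^ α)]
  · linarith [le_abs_self ((-y) ^ α), abs_nonneg (y ^ α)]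

lemma exp_neg_abs_sub_one_sq_div_le {l : ℝ} (hl : 0 < l) (hl1 : l ≤ 1) (y : ℝ) :
    Real.exp (-(|y| - 1) ^ 2 / l) ≤ Real.exp 1 * Real.exp (-(1 / 2) * y ^ 2) := by
  rw [← Real.exp_add, Real.exp_le_exp, neg_div]
  have h := le_div_self (sq_nonneg (|y| - 1)) hl hl1
  nlinarith [sq_nonneg (|y| - 2), sq_abs y]

lemma integrable_abs_rpow_mul_exp_neg_abs_sub_one_sq_div {α l : ℝ} (hα : 0 ≤ α) (hl : 0 < l)
    (hl1 : l ≤ 1) :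
    Integrable fun y : ℝ => |y| ^ α * (4 * Real.exp (-(|y| - 1) ^ 2 / l)) := by
  refine ((integrable_abs_rpow_mul_exp_neg_mul_sq (α := α) (b := 1 / 2) (by linarith)
    (by norm_num)).const_mul (4 * Real.exp 1)).mono' (by fun_prop) (.of_forall fun y => ?_)
  rw [Real.norm_of_nonneg (by positivity)]
  have := mul_le_mul_of_nonneg_left (exp_neg_abs_sub_one_sq_div_le hl hl1 y)
    (by positivity : 0 ≤ |y| ^ α * 4)
  linarith

lemma tendsto_integral_abs_rpow_mul_exp_neg_abs_sub_one_sq_div {α : ℝ} (hα : 0 ≤ α) :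
    Tendsto (fun l : ℝ => ∫ y : ℝ, |y| ^ α * (4 * Real.exp (-(|y| - 1) ^ 2 / l)))
      (nhdsWithin 0 (Ioi 0)) (nhds 0) := by
  rw [show nhds (0 : ℝ) = nhds (∫ _ : ℝ, (0 : ℝ)) by simp]
  refine tendsto_integral_filter_of_dominated_convergence
    (fun y => 4 * Real.exp 1 * (|y| ^ α * Real.exp (-(1 / 2) * y ^ 2)))
    (.of_forall fun l => by fun_prop) ?_
    ((integrable_abs_rpow_mul_exp_neg_mul_sq (by linarith) (by norm_num)).const_mul _) ?_
  · filter_upwards [Ioo_mem_nhdsGT (zero_lt_one' ℝ)] with l hl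
    refine .of_forall fun y => ?_
    rw [Real.norm_of_nonneg (by positivity)]
    have := mul_le_mul_of_nonneg_left (exp_neg_abs_sub_one_sq_div_le hl.1 hl.2.le y)
      (by positivity : 0 ≤ |y| ^ α * 4)
    linarith
  · have hae : ∀ᵐ y : ℝ, y ∉ ({1, -1} : Set ℝ) :=
      measure_eq_zero_iff_ae_notMem.1 ((Set.toFinite _).measure_zero volume)
    filter_upwards [hae] with y hy
    have hpos : 0 < (|y| - 1) ^ 2 := by
      refine sq_pos_of_ne_zero fun h => hy ?_
      simpa using eq_or_eq_neg_of_abs_eq (sub_eq_zero.1 h)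
    have h := (Real.tendsto_exp_neg_atTop_nhds_zero.comp
      (tendsto_inv_nhdsGT_zero.const_mul_atTop hpos)).const_mul (|y| ^ α * 4)
    rw [mul_zero] at h
    refine h.congr fun l => ?_
    simp only [Function.comp_apply, div_eq_mul_inv, mul_assoc, neg_mul]

/-- For every `α ≥ 0`,
`lim_{λ→0⁺} ∫₀¹ ∫_ℝ (s|y|)^α (∫_{-1}^1 p_{λ(1-s)}(x-y) dx - 𝟙_{[-1,1]}(y))² dy ds = 0`. -/
theorem tendsto_integral_indicator (α : ℝ) (hα : 0 ≤ α) :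
    Tendsto (fun l : ℝ => ∫ s in Ioo (0:ℝ) 1, ∫ y : ℝ,
        (s * |y|) ^ α *
          ((∫ x in Icc (-1:ℝ) 1, heatKernel (l * (1 - s)) (x - y)) -
            (if y ∈ Icc (-1:ℝ) 1 then (1:ℝ) else 0)) ^ 2)
      (nhdsWithin 0 (Ioi 0)) (nhds 0) := by
  refine squeeze_zero_norm' ?_ (tendsto_integral_abs_rpow_mul_exp_neg_abs_sub_one_sq_div hα)
  filter_upwards [Ioo_mem_nhdsGT (zero_lt_one' ℝ)] with l ⟨hl, hl1⟩
  suffices h : ∀ s ∈ Ioo (0:ℝ) 1, ‖∫ y : ℝ, (s * |y|) ^ α *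
      ((∫ x in Icc (-1:ℝ) 1, heatKernel (l * (1 - s)) (x - y)) -
        (if y ∈ Icc (-1:ℝ) 1 then (1:ℝ) else 0)) ^ 2‖ ≤
      ∫ y : ℝ, |y| ^ α * (4 * Real.exp (-(|y| - 1) ^ 2 / l)) by
    simpa using norm_setIntegral_le_of_norm_le_const (μ := volume) (by simp) h
  rintro s ⟨hs, hs1⟩
  refine norm_integral_le_of_norm_le
    (integrable_abs_rpow_mul_exp_neg_abs_sub_one_sq_div hα hl hl1.le) (.of_forall fun y => ?_)
  have ht : 0 < l * (1 - s) := mul_pos hl (by linarith)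
  rw [norm_mul, norm_pow, Real.norm_of_nonneg (by positivity), Real.norm_eq_abs]
  gcongr
  · exact mul_le_of_le_one_left (abs_nonneg y) hs1.le
  · calc _ ≤ (2 * Real.exp (-(|y| - 1) ^ 2 / (2 * (l * (1 - s))))) ^ 2 := by
          gcongr
          exact abs_setIntegral_heatKernel_sub_indicator_le ht y
      _ = 4 * Real.exp (-(|y| - 1) ^ 2 / (l * (1 - s))) := by
          rw [mul_pow, ← Real.exp_nat_mul]
          congr 2
          · norm_num
          · push_cast
            field_simp
      _ ≤ 4 * Real.exp (-(|y| - 1) ^ 2 / l) := by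
          rw [neg_div, neg_div]
          gcongr
          exact mul_le_of_le_one_right hl.le (by linarith)
end

section
/- For every α ≥ 0, one has lim_{ε→0⁺} ∫₀¹ ∫_ℝ ( s |y| )^α · ( ∫_{−1}^{1} p_{1−s}( ε x − y ) dx − 2 p_{1−s}( y ) )² dy ds = 0. -/
open MeasureTheory Filter Set

open ProbabilityTheory in
lemma heatKernel_sub_eq_gaussianPDFReal {t : ℝ} (ht : 0 < t) (a y : ℝ) :
    heatKernel t (a - y) = gaussianPDFReal a t.toNNReal y := by
  rw [heatKernel, gaussianPDFReal, Real.coe_toNNReal t ht.le, Real.sqrt_eq_rpow,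
    ← Real.rpow_neg (by positivity), neg_div, ← neg_sub y a, neg_sq]

lemma heatKernel_nonneg {t : ℝ} (ht : 0 < t) (x : ℝ) : 0 ≤ heatKernel t x := by
  unfold heatKernel; positivity

lemma heatKernel_le {t : ℝ} (ht : 0 < t) (x : ℝ) :
    heatKernel t x ≤ (2 * Real.pi * t) ^ (-(1:ℝ)/2) := by
  unfold heatKernel
  refine mul_le_of_le_one_right (by positivity) (Real.exp_le_one_iff.2 ?_)
  exact div_nonpos_of_nonpos_of_nonneg (by nlinarith [sq_nonneg x]) (by positivity)

lemma heatKernel_neg (t x : ℝ) : heatKernel t (-x) = heatKernel t x := by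
  simp [heatKernel]

lemma continuous_heatKernel (t : ℝ) : Continuous (heatKernel t) := by
  unfold heatKernel; fun_prop

lemma measurable_heatKernel : Measurable fun p : ℝ × ℝ => heatKernel p.1 p.2 := by
  unfold heatKernel; fun_prop

open ProbabilityTheory in
lemma integrable_exp_mul_heatKernel {t : ℝ} (ht : 0 < t) (c a : ℝ) :
    Integrable fun y => Real.exp (c * y) * heatKernel t (a - y) := by
  have h0 : t.toNNReal ≠ 0 := by simpa using ht
  have h := integrable_exp_mul_gaussianReal (μ := a) (v := t.toNNReal) c
  rw [gaussianReal_of_var_ne_zero _ h0, integrable_withDensity_iff_integrable_smul'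
    (measurable_gaussianPDF _ _) (by simp [gaussianPDF])] at h
  refine h.congr (ae_of_all _ fun y => ?_)
  simp [toReal_gaussianPDF, heatKernel_sub_eq_gaussianPDFReal ht, mul_comm]

open ProbabilityTheory in
lemma integral_exp_mul_heatKernel {t : ℝ} (ht : 0 < t) (c a : ℝ) :
    ∫ y, Real.exp (c * y) * heatKernel t (a - y) = Real.exp (a * c + t * c ^ 2 / 2) := by
  have h0 : t.toNNReal ≠ 0 := by simpa using ht
  have h := congrFun (mgf_fun_id_gaussianReal (μ := a) (v := t.toNNReal)) c
  rw [mgf, integral_gaussianReal_eq_integral_smul h0, Real.coe_toNNReal t ht.le] at h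
  rw [← h]
  simp [heatKernel_sub_eq_gaussianPDFReal ht, mul_comm]

/-- A shifted heat kernel is dominated by a multiple of the kernel at twice the time. -/
lemma heatKernel_sub_le {t : ℝ} (ht : 0 < t) {a : ℝ} (ha : |a| ≤ 1) (y : ℝ) :
    heatKernel t (a - y) ≤ 2 * Real.exp (1 / (2 * t)) * heatKernel (2 * t) (0 - y) := by
  have h1 : (2 * Real.pi * t) ^ (-(1:ℝ)/2) ≤ 2 * (2 * Real.pi * (2 * t)) ^ (-(1:ℝ)/2) := by
    have e : 2 * Real.pi * (2 * t) = 2 * (2 * Real.pi * t) := by ring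
    rw [e, Real.mul_rpow zero_le_two (by positivity), ← mul_assoc]
    refine le_mul_of_one_le_left (by positivity) ?_
    rw [show (2:ℝ) * 2 ^ (-(1:ℝ)/2) = 2 ^ ((1:ℝ) + -(1:ℝ)/2) by
      rw [Real.rpow_add (by norm_num), Real.rpow_one]]
    exact Real.one_le_rpow (by norm_num) (by norm_num)
  have h2 : Real.exp (-(a - y) ^ 2 / (2 * t)) ≤
      Real.exp (1 / (2 * t)) * Real.exp (-(0 - y) ^ 2 / (2 * (2 * t))) := by
    rw [← Real.exp_add, Real.exp_le_exp]
    have : 1 / (2 * t) + -(0 - y) ^ 2 / (2 * (2 * t)) - -(a - y) ^ 2 / (2 * t) =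
        (2 - y ^ 2 + 2 * (a - y) ^ 2) / (4 * t) := by field_simp; ring
    have h3 : 0 ≤ (2 - y ^ 2 + 2 * (a - y) ^ 2) / (4 * t) := by
      have := (sq_le_one_iff_abs_le_one a).2 ha
      have : 0 ≤ 2 - y ^ 2 + 2 * (a - y) ^ 2 := by nlinarith [sq_nonneg (2 * a - y)]
      positivity
    linarith
  unfold heatKernel
  calc _ ≤ _ := mul_le_mul h1 h2 (by positivity) (by positivity)
    _ = _ := by ring

lemma abs_rpow_le_exp {α : ℝ} (hα : 0 ≤ α) (y : ℝ) :
    |y| ^ α ≤ (α + 1) ^ α * (Real.exp (1 * y) + Real.exp (-1 * y)) := by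
  have h1 : |y| ≤ (α + 1) * Real.exp (|y| / (α + 1)) := by
    have := Real.add_one_le_exp (|y| / (α + 1))
    have h : |y| = (α + 1) * (|y| / (α + 1)) := by field_simp
    calc |y| = (α + 1) * (|y| / (α + 1)) := h
      _ ≤ _ := by gcongr; linarith
  have h2 : |y| / (α + 1) * α ≤ |y| := by
    rw [div_mul_eq_mul_div, div_le_iff₀ (by positivity)]
    nlinarith [abs_nonneg y]
  calc |y| ^ α ≤ ((α + 1) * Real.exp (|y| / (α + 1))) ^ α := by gcongr
    _ = (α + 1) ^ α * Real.exp (|y| / (α + 1) * α) := by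
      rw [Real.mul_rpow (by positivity) (by positivity), ← Real.exp_mul]
    _ ≤ (α + 1) ^ α * Real.exp |y| := by gcongr
    _ ≤ _ := by
      gcongr
      rcases abs_cases y with h | h <;> rw [h.1] <;> simp [Real.exp_nonneg]

lemma integrableOn_heatKernel_comp (t ε y : ℝ) :
    IntegrableOn (fun x => heatKernel t (ε * x - y)) (Icc (-1) 1) :=
  ((continuous_heatKernel t).comp (by fun_prop)).integrableOn_Icc

/-- If the kernel is bounded by `K` on the relevant points, so is half its window integral. -/
lemma setIntegral_heatKernel_le {t ε y K : ℝ}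
    (h : ∀ x ∈ Icc (-1 : ℝ) 1, heatKernel t (ε * x - y) ≤ K) :
    ∫ x in Icc (-1:ℝ) 1, heatKernel t (ε * x - y) ≤ 2 * K := by
  calc _ ≤ ∫ x in Icc (-1:ℝ) 1, K :=
        setIntegral_mono_on (integrableOn_heatKernel_comp t ε y) (by simp) measurableSet_Icc h
    _ = 2 * K := by simp; norm_num

lemma sq_setIntegral_heatKernel_sub_le {t : ℝ} (ht : 0 < t) (ε y : ℝ) :
    ((∫ x in Icc (-1:ℝ) 1, heatKernel t (ε * x - y)) - 2 * heatKernel t y) ^ 2 ≤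
      2 * (2 * Real.pi * t) ^ (-(1:ℝ)/2) *
        ((∫ x in Icc (-1:ℝ) 1, heatKernel t (ε * x - y)) + 2 * heatKernel t (0 - y)) := by
  rw [zero_sub, heatKernel_neg]
  have hA0 : 0 ≤ ∫ x in Icc (-1:ℝ) 1, heatKernel t (ε * x - y) :=
    integral_nonneg fun x => heatKernel_nonneg ht _
  have hA := setIntegral_heatKernel_le (t := t) (ε := ε) (y := y) fun x _ => heatKernel_le ht _
  have hp := heatKernel_le ht y
  have hp0 := heatKernel_nonneg ht y
  nlinarith [mul_nonneg hA0 hp0]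

lemma integrable_prod_exp_mul_heatKernel {t : ℝ} (ht : 0 < t) (c ε : ℝ) :
    Integrable (fun p : ℝ × ℝ => Real.exp (c * p.2) * heatKernel t (ε * p.1 - p.2))
      ((volume.restrict (Icc (-1) 1)).prod volume) := by
  rw [integrable_prod_iff]
  · refine ⟨ae_of_all _ fun x => integrable_exp_mul_heatKernel ht c (ε * x), ?_⟩
    have h : ∀ x : ℝ, ∫ y, ‖Real.exp (c * y) * heatKernel t (ε * x - y)‖ =
        Real.exp (ε * x * c + t * c ^ 2 / 2) := fun x => by
      rw [← integral_exp_mul_heatKernel ht]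
      exact integral_congr_ae (ae_of_all _ fun y => Real.norm_of_nonneg
        (mul_nonneg (Real.exp_nonneg _) (heatKernel_nonneg ht _)))
    simp only [h]
    exact Continuous.integrableOn_Icc (by fun_prop)
  · have := continuous_heatKernel t
    exact Continuous.aestronglyMeasurable (by fun_prop)

lemma integrable_exp_mul_setIntegral_heatKernel {t : ℝ} (ht : 0 < t) (c ε : ℝ) :
    Integrable fun y => Real.exp (c * y) * ∫ x in Icc (-1:ℝ) 1, heatKernel t (ε * x - y) := by
  simpa only [integral_const_mul] using
    (integrable_prod_exp_mul_heatKernel ht c ε).integral_prod_right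

lemma integral_exp_mul_setIntegral_heatKernel_le {t c ε : ℝ} (ht : 0 < t) (ht1 : t ≤ 1)
    (hc : |c| ≤ 1) (hε : |ε| ≤ 1) :
    ∫ y, Real.exp (c * y) * ∫ x in Icc (-1:ℝ) 1, heatKernel t (ε * x - y) ≤
      2 * Real.exp 2 := by
  simp_rw [← integral_const_mul]
  rw [← integral_integral_swap (integrable_prod_exp_mul_heatKernel ht c ε)]
  simp_rw [integral_exp_mul_heatKernel ht]
  calc _ ≤ ∫ x in Icc (-1:ℝ) 1, Real.exp 2 := by
        refine setIntegral_mono_on (Continuous.integrableOn_Icc (by fun_prop)) (by simp)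
          measurableSet_Icc fun x hx => Real.exp_le_exp.2 ?_
        have h1 : |ε * x * c| ≤ 1 := by
          rw [abs_mul, abs_mul]
          exact mul_le_one₀ (mul_le_one₀ hε (abs_nonneg _) (abs_le.2 hx)) (abs_nonneg _) hc
        have h2 := (sq_le_one_iff_abs_le_one c).2 hc
        have h3 : t * c ^ 2 ≤ 1 := mul_le_one₀ ht1 (sq_nonneg _) h2
        linarith [le_abs_self (ε * x * c)]
    _ = _ := by simp; norm_num

/-- The spatial integral for a fixed time `s`. -/
noncomputable def windowError (α ε s : ℝ) : ℝ :=
  ∫ y : ℝ, (s * |y|) ^ α *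
    ((∫ x in Icc (-1:ℝ) 1, heatKernel (1 - s) (ε * x - y)) - 2 * heatKernel (1 - s) y) ^ 2

lemma mul_abs_rpow_le_exp {α s : ℝ} (hα : 0 ≤ α) (hs : s ∈ Ioo (0:ℝ) 1) (y : ℝ) :
    (s * |y|) ^ α ≤ (α + 1) ^ α * (Real.exp (1 * y) + Real.exp (-1 * y)) := by
  have := hs.1
  refine le_trans ?_ (abs_rpow_le_exp hα y)
  gcongr
  exact mul_le_of_le_one_left (abs_nonneg _) hs.2.le

lemma windowError_nonneg (α ε : ℝ) {s : ℝ} (hs : s ∈ Ioo (0:ℝ) 1) : 0 ≤ windowError α ε s :=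
  integral_nonneg fun _ =>
    mul_nonneg (Real.rpow_nonneg (mul_nonneg hs.1.le (abs_nonneg _)) _) (sq_nonneg _)

lemma windowError_le {α ε s : ℝ} (hα : 0 ≤ α) (hs : s ∈ Ioo (0:ℝ) 1) (hε : |ε| ≤ 1) :
    windowError α ε s ≤
      16 * (α + 1) ^ α * Real.exp 2 * (2 * Real.pi * (1 - s)) ^ (-(1:ℝ)/2) := by
  have ht : 0 < 1 - s := sub_pos.2 hs.2
  have ht1 : 1 - s ≤ 1 := by linarith [hs.1]
  set t := 1 - s
  set C := (α + 1) ^ α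
  set K := (2 * Real.pi * t) ^ (-(1:ℝ)/2)
  have hC : 0 ≤ C := by positivity
  have hK : 0 ≤ K := by positivity
  let A : ℝ → ℝ := fun y => ∫ x in Icc (-1:ℝ) 1, heatKernel t (ε * x - y)
  have hi := integrable_exp_mul_setIntegral_heatKernel ht
  have hj := integrable_exp_mul_heatKernel ht
  have hA : ∀ c : ℝ, |c| ≤ 1 → ∫ y, Real.exp (c * y) * A y ≤ 2 * Real.exp 2 := fun c hc =>
    integral_exp_mul_setIntegral_heatKernel_le ht ht1 hc hε
  have hp : ∀ c : ℝ, |c| ≤ 1 → ∫ y, Real.exp (c * y) * heatKernel t (0 - y) ≤ Real.exp 2 := by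
    intro c hc
    rw [integral_exp_mul_heatKernel ht, Real.exp_le_exp]
    have h2 := (sq_le_one_iff_abs_le_one c).2 hc
    have h3 : t * c ^ 2 ≤ 1 := mul_le_one₀ ht1 (sq_nonneg _) h2
    linarith
  have hsum : ∀ c, Integrable fun y =>
      Real.exp (c * y) * A y + 2 * (Real.exp (c * y) * heatKernel t (0 - y)) := fun c =>
    (hi c ε).add ((hj c 0).const_mul 2)
  have hle : ∀ c : ℝ, |c| ≤ 1 → ∫ y, (Real.exp (c * y) * A y +
      2 * (Real.exp (c * y) * heatKernel t (0 - y))) ≤ 4 * Real.exp 2 := by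
    intro c hc
    rw [integral_add (hi c ε) ((hj c 0).const_mul 2), integral_const_mul]
    linarith [hA c hc, hp c hc]
  calc windowError α ε s
      ≤ ∫ y, 2 * C * K * ((Real.exp (1 * y) * A y +
          2 * (Real.exp (1 * y) * heatKernel t (0 - y))) + (Real.exp (-1 * y) * A y +
          2 * (Real.exp (-1 * y) * heatKernel t (0 - y)))) := by
        refine integral_mono_of_nonneg (ae_of_all _ fun y => ?_)
          (((hsum 1).add (hsum (-1))).const_mul _) (ae_of_all _ fun y => ?_)
        · exact mul_nonneg (Real.rpow_nonneg (mul_nonneg hs.1.le (abs_nonneg _)) _) (sq_nonneg _)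
        · refine (mul_le_mul (mul_abs_rpow_le_exp hα hs y)
            (sq_setIntegral_heatKernel_sub_le ht ε y) (sq_nonneg _) (by positivity)).trans_eq ?_
          ring
    _ ≤ 2 * C * K * (4 * Real.exp 2 + 4 * Real.exp 2) := by
        rw [integral_const_mul, integral_add (hsum 1) (hsum (-1))]
        gcongr
        · exact hle 1 (by simp)
        · exact hle (-1) (by simp)
    _ = _ := by ring

lemma measurable_windowIntegrand (α ε : ℝ) : Measurable fun p : ℝ × ℝ =>
    (p.1 * |p.2|) ^ α * ((∫ x in Icc (-1:ℝ) 1, heatKernel (1 - p.1) (ε * x - p.2)) -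
      2 * heatKernel (1 - p.1) p.2) ^ 2 := by
  have h1 : Measurable fun p : ℝ × ℝ => heatKernel (1 - p.1) p.2 :=
    measurable_heatKernel.comp (by fun_prop : Measurable fun p : ℝ × ℝ => (1 - p.1, p.2))
  have h2 : Measurable fun p : ℝ × ℝ =>
      ∫ x in Icc (-1:ℝ) 1, heatKernel (1 - p.1) (ε * x - p.2) := by
    refine StronglyMeasurable.measurable (StronglyMeasurable.integral_prod_right'
      (f := fun q : (ℝ × ℝ) × ℝ => heatKernel (1 - q.1.1) (ε * q.2 - q.1.2)) ?_)
    exact (measurable_heatKernel.comp (by fun_prop :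
      Measurable fun q : (ℝ × ℝ) × ℝ => (1 - q.1.1, ε * q.2 - q.1.2))).stronglyMeasurable
  fun_prop

lemma tendsto_windowError {α s : ℝ} (hα : 0 ≤ α) (hs : s ∈ Ioo (0:ℝ) 1) :
    Tendsto (fun ε => windowError α ε s) (nhds 0) (nhds 0) := by
  have ht : 0 < 1 - s := sub_pos.2 hs.2
  have hlim : ∀ y, Tendsto (fun ε => (s * |y|) ^ α *
      ((∫ x in Icc (-1:ℝ) 1, heatKernel (1 - s) (ε * x - y)) - 2 * heatKernel (1 - s) y) ^ 2)
      (nhds 0) (nhds 0) := by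
    intro y
    have hk := continuous_heatKernel (1 - s)
    have hc : Continuous fun ε : ℝ => ∫ x in Icc (-1:ℝ) 1, heatKernel (1 - s) (ε * x - y) :=
      continuous_parametric_integral_of_continuous (by fun_prop) isCompact_Icc
    have hc' : Continuous fun ε : ℝ => (s * |y|) ^ α *
      ((∫ x in Icc (-1:ℝ) 1, heatKernel (1 - s) (ε * x - y)) - 2 * heatKernel (1 - s) y) ^ 2 := by
      fun_prop
    convert hc'.tendsto 0 using 2
    simp [heatKernel_neg]
    norm_num
  set K := (2 * Real.pi * (1 - s)) ^ (-(1:ℝ)/2)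
  have hK : 0 ≤ K := by positivity
  set D := 2 * Real.exp (1 / (2 * (1 - s)))
  have ht2 : 0 < 2 * (1 - s) := by positivity
  have hD := integrable_exp_mul_heatKernel ht2
  unfold windowError
  suffices h : Tendsto (fun ε => ∫ y : ℝ, (s * |y|) ^ α *
      ((∫ x in Icc (-1:ℝ) 1, heatKernel (1 - s) (ε * x - y)) - 2 * heatKernel (1 - s) y) ^ 2)
      (nhds 0) (nhds (∫ _ : ℝ, (0:ℝ))) by simpa only [integral_zero] using h
  refine tendsto_integral_filter_of_dominated_convergence
    (fun y => (α + 1) ^ α * (2 * K) * (4 * D) * (Real.exp (1 * y) * heatKernel (2 * (1 - s)) (0 - y)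
      + Real.exp (-1 * y) * heatKernel (2 * (1 - s)) (0 - y)))
    (Eventually.of_forall fun ε => ?_) ?_ (((hD 1 0).add (hD (-1) 0)).const_mul _)
    (ae_of_all _ hlim)
  · exact ((measurable_windowIntegrand α ε).comp
      (measurable_prodMk_left (x := s))).aestronglyMeasurable
  · filter_upwards [Metric.closedBall_mem_nhds (0:ℝ) one_pos] with ε hε
    have hε : |ε| ≤ 1 := by simpa using hε
    refine ae_of_all _ fun y => ?_
    rw [Real.norm_of_nonneg (mul_nonneg
      (Real.rpow_nonneg (mul_nonneg hs.1.le (abs_nonneg _)) _) (sq_nonneg _))]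
    have h1 : ∫ x in Icc (-1:ℝ) 1, heatKernel (1 - s) (ε * x - y) ≤
        2 * (D * heatKernel (2 * (1 - s)) (0 - y)) := by
      refine setIntegral_heatKernel_le fun x hx => heatKernel_sub_le ht ?_ y
      rw [abs_mul]
      exact mul_le_one₀ hε (abs_nonneg _) (abs_le.2 hx)
    have h2 : heatKernel (1 - s) (0 - y) ≤ D * heatKernel (2 * (1 - s)) (0 - y) :=
      heatKernel_sub_le ht (by simp) y
    have h3 := (sq_setIntegral_heatKernel_sub_le ht ε y).trans
      (mul_le_mul_of_nonneg_left (show _ ≤ 4 * D * heatKernel (2 * (1 - s)) (0 - y) by linarith)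
        (by positivity))
    refine (mul_le_mul (mul_abs_rpow_le_exp hα hs y) h3 (sq_nonneg _)
      (by positivity)).trans_eq ?_
    ring

lemma integrableOn_heatKernel_prefactor :
    IntegrableOn (fun s : ℝ => (2 * Real.pi * (1 - s)) ^ (-(1:ℝ)/2)) (Ioo 0 1) := by
  have h : IntervalIntegrable (fun s : ℝ => s ^ (-(1:ℝ)/2)) volume 0 1 :=
    intervalIntegral.intervalIntegrable_rpow' (by norm_num)
  have h' := (h.comp_sub_left 1).symm
  simp only [sub_zero, sub_self] at h'
  rw [intervalIntegrable_iff_integrableOn_Ioo_of_le zero_le_one] at h'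
  refine IntegrableOn.congr_fun (h'.const_mul ((2 * Real.pi) ^ (-(1:ℝ)/2)))
    (fun s hs => ?_) measurableSet_Ioo
  exact (Real.mul_rpow (by positivity) (sub_nonneg.2 hs.2.le)).symm

/-- For every `α ≥ 0`,
`lim_{ε→0⁺} ∫₀¹ ∫_ℝ (s|y|)^α (∫_{-1}^1 p_{1-s}(εx - y) dx - 2 p_{1-s}(y))² dy ds = 0`. -/
theorem tendsto_integral_shrinking (α : ℝ) (hα : 0 ≤ α) :
    Tendsto (fun ε : ℝ => ∫ s in Ioo (0:ℝ) 1, ∫ y : ℝ,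
        (s * |y|) ^ α *
          ((∫ x in Icc (-1:ℝ) 1, heatKernel (1 - s) (ε * x - y)) -
            2 * heatKernel (1 - s) y) ^ 2)
      (nhdsWithin 0 (Ioi 0)) (nhds 0) := by
  change Tendsto (fun ε : ℝ => ∫ s in Ioo (0:ℝ) 1, windowError α ε s) _ _
  refine Tendsto.mono_left ?_ nhdsWithin_le_nhds
  suffices h : Tendsto (fun ε : ℝ => ∫ s in Ioo (0:ℝ) 1, windowError α ε s) (nhds 0)
      (nhds (∫ _ in Ioo (0:ℝ) 1, (0:ℝ))) by simpa only [integral_zero] using h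
  refine tendsto_integral_filter_of_dominated_convergence
    (fun s => 16 * (α + 1) ^ α * Real.exp 2 * (2 * Real.pi * (1 - s)) ^ (-(1:ℝ)/2))
    (Eventually.of_forall fun ε => ?_) ?_ (integrableOn_heatKernel_prefactor.const_mul _) ?_
  · exact (measurable_windowIntegrand α ε).stronglyMeasurable
      |>.integral_prod_right'.aestronglyMeasurable
  · filter_upwards [Metric.closedBall_mem_nhds (0:ℝ) one_pos] with ε hε
    filter_upwards [ae_restrict_mem measurableSet_Ioo] with s hs
    rw [Real.norm_of_nonneg (windowError_nonneg α ε hs)]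
    exact windowError_le hα hs (by simpa using hε)
  · filter_upwards [ae_restrict_mem measurableSet_Ioo] with s hs
    exact tendsto_windowError hα hs
end

section
/- Let φ : ℝ → ℝ be measurable with |φ(z)| ≤ C(1 + |z|)^α for some constants C > 0 and α ≥ 0. Then for every t > 0 and every x ∈ ℝ, the integral ∫₀ᵗ ∫_ℝ ∫_ℝ p_{t−s}( x − y )² φ(z)² p_{s|y|}( z ) dz dy ds is finite (the inner integral being taken over the set where s|y| > 0). -/
open MeasureTheory Filter Set

theorem heatKernel_eq_gaussianPDFReal {v : ℝ} (hv : 0 < v) (m z : ℝ) :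
    heatKernel v (m - z) = ProbabilityTheory.gaussianPDFReal m v.toNNReal z := by
  have h : (0 : ℝ) ≤ 2 * Real.pi * v := by positivity
  rw [heatKernel, ProbabilityTheory.gaussianPDFReal, Real.coe_toNNReal v hv.le,
    Real.sqrt_eq_rpow, ← Real.rpow_neg h, show (m - z) ^ 2 = (z - m) ^ 2 by ring]
  norm_num

theorem heatKernel_nonneg_s14 {v : ℝ} (hv : 0 ≤ v) (z : ℝ) : 0 ≤ heatKernel v z := by
  unfold heatKernel
  positivity

theorem measurable_heatKernel_s14 (v : ℝ) : Measurable (heatKernel v) := by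
  unfold heatKernel
  fun_prop

theorem heatKernel_zero_left (z : ℝ) : heatKernel 0 z = 0 := by
  rw [heatKernel, mul_zero, Real.zero_rpow (by norm_num), zero_mul]

theorem heatKernel_sub_comm (v a b : ℝ) : heatKernel v (a - b) = heatKernel v (b - a) := by
  rw [heatKernel, heatKernel, show (a - b) ^ 2 = (b - a) ^ 2 by ring]

/-- The square of a heat kernel is a multiple of the heat kernel at half the time. -/
theorem heatKernel_sq_s14 {v : ℝ} (hv : 0 < v) (z : ℝ) :
    heatKernel v z ^ 2 =
      (4 * Real.pi) ^ (-(1 : ℝ) / 2) * v ^ (-(1 : ℝ) / 2) * heatKernel (v / 2) z := by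
  have hπ := Real.pi_pos
  have hexp : Real.exp (-z ^ 2 / (2 * v)) ^ 2 = Real.exp (-z ^ 2 / (2 * (v / 2))) := by
    rw [← Real.exp_nat_mul]
    congr 1
    field_simp
    push_cast
    ring
  have hpow : ((2 * Real.pi * v) ^ (-(1 : ℝ) / 2)) ^ 2 =
      (4 * Real.pi) ^ (-(1 : ℝ) / 2) * v ^ (-(1 : ℝ) / 2) *
        (2 * Real.pi * (v / 2)) ^ (-(1 : ℝ) / 2) := by
    rw [← Real.mul_rpow (by positivity) hv.le, ← Real.mul_rpow (by positivity) (by positivity),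
      sq, ← Real.mul_rpow (by positivity) (by positivity)]
    congr 1
    ring
  rw [heatKernel, heatKernel, mul_pow, hexp, hpow]
  ring

/-- Exponential tilting of a heat kernel. -/
theorem exp_mul_heatKernel {v : ℝ} (hv : 0 < v) (c m z : ℝ) :
    Real.exp (c * z) * heatKernel v (m - z) =
      Real.exp (c * m + c ^ 2 * v / 2) * heatKernel v (m + c * v - z) := by
  rw [heatKernel, heatKernel, mul_left_comm, ← Real.exp_add, mul_left_comm, ← Real.exp_add]
  congr 2
  field_simp
  ring

theorem lintegral_exp_mul_heatKernel {v : ℝ} (hv : 0 < v) (c m : ℝ) :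
    ∫⁻ z : ℝ, ENNReal.ofReal (Real.exp (c * z) * heatKernel v (m - z)) =
      ENNReal.ofReal (Real.exp (c * m + c ^ 2 * v / 2)) := by
  simp_rw [exp_mul_heatKernel hv, ENNReal.ofReal_mul (Real.exp_pos _).le,
    heatKernel_eq_gaussianPDFReal hv]
  rw [lintegral_const_mul' _ _ ENNReal.ofReal_ne_top,
    ProbabilityTheory.lintegral_gaussianPDFReal_eq_one _ (by simpa using hv), mul_one]

/-- Exponential moments of the absolute value under a heat kernel. -/
theorem lintegral_exp_abs_mul_heatKernel_le {v c : ℝ} (hv : 0 < v) (hc : 0 ≤ c) (m : ℝ) :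
    ∫⁻ z : ℝ, ENNReal.ofReal (Real.exp (c * |z|) * heatKernel v (m - z)) ≤
      ENNReal.ofReal (2 * Real.exp (c * |m| + c ^ 2 * v / 2)) := by
  have hmeas : Measurable fun z : ℝ =>
      ENNReal.ofReal (Real.exp (c * z) * heatKernel v (m - z)) := by
    have := (measurable_heatKernel_s14 v).comp (measurable_const.sub measurable_id : Measurable
      fun z : ℝ => m - z)
    exact ((by fun_prop : Measurable fun z : ℝ => Real.exp (c * z)).mul this).ennreal_ofReal
  calc
    _ ≤ ∫⁻ z : ℝ, (ENNReal.ofReal (Real.exp (c * z) * heatKernel v (m - z)) +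
          ENNReal.ofReal (Real.exp (-c * z) * heatKernel v (m - z))) := by
      refine lintegral_mono fun z => ?_
      have hk := heatKernel_nonneg_s14 hv.le (m - z)
      rw [← ENNReal.ofReal_add (by positivity) (by positivity), ← add_mul]
      refine ENNReal.ofReal_le_ofReal (mul_le_mul_of_nonneg_right ?_ hk)
      rcases abs_cases z with ⟨h, -⟩ | ⟨h, -⟩
      · rw [h]
        exact le_add_of_nonneg_right (Real.exp_pos _).le
      · rw [h, mul_neg, ← neg_mul]
        exact le_add_of_nonneg_left (Real.exp_pos _).le
    _ = ENNReal.ofReal (Real.exp (c * m + c ^ 2 * v / 2) +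
          Real.exp (-c * m + (-c) ^ 2 * v / 2)) := by
      rw [lintegral_add_left hmeas, lintegral_exp_mul_heatKernel hv,
        lintegral_exp_mul_heatKernel hv, ENNReal.ofReal_add (by positivity) (by positivity)]
    _ ≤ _ := by
      refine ENNReal.ofReal_le_ofReal ?_
      rw [two_mul, neg_sq]
      have h₁ : c * m ≤ c * |m| := mul_le_mul_of_nonneg_left (le_abs_self m) hc
      have h₂ : -c * m ≤ c * |m| := by
        have := mul_le_mul_of_nonneg_left (neg_le_abs m) hc
        linarith
      gcongr

theorem one_add_abs_rpow_le_exp {α : ℝ} (hα : 0 ≤ α) (z : ℝ) :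
    (1 + |z|) ^ α ≤ Real.exp (α * |z|) := by
  rw [mul_comm, Real.exp_mul]
  refine Real.rpow_le_rpow (by positivity) ?_ hα
  linarith [Real.add_one_le_exp |z|]

theorem sq_le_exp_of_abs_le {φ : ℝ → ℝ} {C α : ℝ} (hC : 0 < C) (hα : 0 ≤ α)
    (hbound : ∀ z : ℝ, |φ z| ≤ C * (1 + |z|) ^ α) (z : ℝ) :
    φ z ^ 2 ≤ C ^ 2 * Real.exp (2 * α * |z|) := by
  calc
    φ z ^ 2 = |φ z| ^ 2 := (sq_abs _).symm
    _ ≤ (C * Real.exp (α * |z|)) ^ 2 := by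
      gcongr
      exact (hbound z).trans (by gcongr; exact one_add_abs_rpow_le_exp hα z)
    _ = _ := by
      rw [mul_pow, ← Real.exp_nat_mul]
      congr 2
      push_cast
      ring

/-- Growth in the variance of the second moment of a function of at most exponential growth. -/
theorem lintegral_sq_mul_heatKernel_le {φ : ℝ → ℝ} {A c v : ℝ} (hA : 0 ≤ A) (hc : 0 ≤ c)
    (hv : 0 ≤ v) (hφ : ∀ z, φ z ^ 2 ≤ A * Real.exp (c * |z|)) :
    ∫⁻ z : ℝ, ENNReal.ofReal (φ z ^ 2 * heatKernel v z) ≤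
      ENNReal.ofReal (2 * A * Real.exp (c ^ 2 * v / 2)) := by
  rcases hv.eq_or_lt with rfl | hv
  · simp [heatKernel_zero_left]
  calc
    _ ≤ ∫⁻ z : ℝ, ENNReal.ofReal A *
          ENNReal.ofReal (Real.exp (c * |z|) * heatKernel v (0 - z)) := by
      refine lintegral_mono fun z => ?_
      rw [← ENNReal.ofReal_mul hA, heatKernel_sub_comm, sub_zero, ← mul_assoc]
      exact ENNReal.ofReal_le_ofReal
        (mul_le_mul_of_nonneg_right (hφ z) (heatKernel_nonneg_s14 hv.le z))
    _ ≤ ENNReal.ofReal A * ENNReal.ofReal (2 * Real.exp (c * |0| + c ^ 2 * v / 2)) := by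
      rw [lintegral_const_mul' _ _ ENNReal.ofReal_ne_top]
      gcongr
      exact lintegral_exp_abs_mul_heatKernel_le hv hc 0
    _ = _ := by
      rw [← ENNReal.ofReal_mul hA, abs_zero, mul_zero, zero_add]
      congr 1
      ring

theorem lintegral_rpow_sub_lt_top {t : ℝ} (ht : 0 < t) :
    ∫⁻ s in Ioo (0 : ℝ) t, ENNReal.ofReal ((t - s) ^ (-(1 : ℝ) / 2)) < ⊤ := by
  have h : IntervalIntegrable (fun s : ℝ => s ^ (-(1 : ℝ) / 2)) volume 0 t :=
    intervalIntegral.intervalIntegrable_rpow' (by norm_num)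
  have h' := (h.comp_sub_left t).symm
  rw [sub_zero, sub_self, intervalIntegrable_iff_integrableOn_Ioo_of_le ht.le] at h'
  exact h'.lintegral_lt_top

/-- If `φ` is measurable with `|φ(z)| ≤ C(1+|z|)^α` for some `C > 0`, `α ≥ 0`, then
for every `t > 0` and `x ∈ ℝ`,
`∫₀ᵗ ∫_ℝ ∫_ℝ p_{t-s}(x-y)² φ(z)² p_{s|y|}(z) dz dy ds < ∞`. -/
theorem condition_finite_polynomial (φ : ℝ → ℝ) (hmeas : Measurable φ)
    (C α : ℝ) (hC : 0 < C) (hα : 0 ≤ α)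
    (hbound : ∀ z : ℝ, |φ z| ≤ C * (1 + |z|) ^ α) (t : ℝ) (ht : 0 < t) (x : ℝ) :
    (∫⁻ s in Ioo (0:ℝ) t, ∫⁻ y : ℝ, ∫⁻ z : ℝ,
      ENNReal.ofReal (heatKernel (t - s) (x - y) ^ 2 * φ z ^ 2 *
        heatKernel (s * |y|) z)) < ⊤ := by
  set c := 2 * α with hc_def
  have hc : 0 ≤ c := by positivity
  set b := c ^ 2 * t / 2 with hb_def
  have hb : 0 ≤ b := by positivity
  set A := 2 * C ^ 2 * (4 * Real.pi) ^ (-(1 : ℝ) / 2) with hA_def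
  have hA : 0 ≤ A := by positivity
  set K := A * (2 * Real.exp (b * |x| + b ^ 2 * t / 2)) with hK_def
  have hK : 0 ≤ K := by positivity
  have hinner : ∀ s ∈ Ioo (0 : ℝ) t, ∀ y : ℝ,
      ∫⁻ z : ℝ, ENNReal.ofReal (heatKernel (t - s) (x - y) ^ 2 * φ z ^ 2 *
        heatKernel (s * |y|) z) ≤
      ENNReal.ofReal (A * (t - s) ^ (-(1 : ℝ) / 2)) *
        ENNReal.ofReal (Real.exp (b * |y|) * heatKernel ((t - s) / 2) (x - y)) := by
    intro s hs y
    have hτ : 0 < t - s := sub_pos.2 hs.2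
    simp_rw [mul_assoc, ENNReal.ofReal_mul (sq_nonneg (heatKernel (t - s) (x - y)))]
    rw [lintegral_const_mul' _ _ ENNReal.ofReal_ne_top]
    calc
      _ ≤ ENNReal.ofReal (heatKernel (t - s) (x - y) ^ 2) *
            ENNReal.ofReal (2 * C ^ 2 * Real.exp (c ^ 2 * (s * |y|) / 2)) := by
        gcongr
        exact lintegral_sq_mul_heatKernel_le (sq_nonneg C) hc
          (mul_nonneg hs.1.le (abs_nonneg y)) (sq_le_exp_of_abs_le hC hα hbound)
      _ ≤ ENNReal.ofReal (heatKernel (t - s) (x - y) ^ 2) *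
            ENNReal.ofReal (2 * C ^ 2 * Real.exp (b * |y|)) := by
        gcongr
        rw [hb_def, show c ^ 2 * t / 2 * |y| = c ^ 2 * (t * |y|) / 2 by ring]
        gcongr
        exact hs.2.le
      _ = _ := by
        rw [← ENNReal.ofReal_mul (sq_nonneg _), ← ENNReal.ofReal_mul (by positivity),
          heatKernel_sq_s14 hτ]
        congr 1
        rw [hA_def]
        ring
  have houter : ∀ s ∈ Ioo (0 : ℝ) t,
      ∫⁻ y : ℝ, ∫⁻ z : ℝ, ENNReal.ofReal (heatKernel (t - s) (x - y) ^ 2 * φ z ^ 2 *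
        heatKernel (s * |y|) z) ≤
      ENNReal.ofReal K * ENNReal.ofReal ((t - s) ^ (-(1 : ℝ) / 2)) := by
    intro s hs
    have hτ : 0 < t - s := sub_pos.2 hs.2
    refine (lintegral_mono (hinner s hs)).trans ?_
    rw [lintegral_const_mul' _ _ ENNReal.ofReal_ne_top]
    calc
      _ ≤ ENNReal.ofReal (A * (t - s) ^ (-(1 : ℝ) / 2)) *
            ENNReal.ofReal (2 * Real.exp (b * |x| + b ^ 2 * ((t - s) / 2) / 2)) := by
        gcongr
        exact lintegral_exp_abs_mul_heatKernel_le (half_pos hτ) hb x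
      _ ≤ ENNReal.ofReal (A * (t - s) ^ (-(1 : ℝ) / 2)) *
            ENNReal.ofReal (2 * Real.exp (b * |x| + b ^ 2 * t / 2)) := by
        gcongr
        linarith [hs.1]
      _ = _ := by
        rw [← ENNReal.ofReal_mul (by positivity), ← ENNReal.ofReal_mul hK]
        congr 1
        rw [hK_def]
        ring
  refine (setLIntegral_mono' measurableSet_Ioo houter).trans_lt ?_
  rw [lintegral_const_mul' _ _ ENNReal.ofReal_ne_top]
  exact ENNReal.mul_lt_top ENNReal.ofReal_lt_top (lintegral_rpow_sub_lt_top ht)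
end
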